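/- arXiv:2205.04303 — 2 statements merged into one kernel-verified Lean document; each statement's English description precedes it below -/
import Mathlib

section
/- For every α ∈ ℝ there exist a function f ∈ D_α and a sequence {f_n} ⊂ D_α such that each f_n is cyclic for D_α, ‖f_n − f‖_α → 0 as n → ∞, f has no zeros in the open unit disc 𝔻, and yet f is not cyclic for D_α. In particular, cyclicity is not preserved by norm convergence in D_α, even when the limit function is zero-free in 𝔻. -/
open Filter Topology

noncomputable section

/-- Membership in the Dirichlet-type space `D_α`, described via Taylor coefficients. -/
def MemD (α : ℝ) (a : ℕ → ℂ) : Prop :=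
  Summable (fun k : ℕ => ‖a k‖ ^ 2 * ((k : ℝ) + 1) ^ α)

/-- The norm of `D_α`, on coefficient sequences. -/
def DNorm (α : ℝ) (a : ℕ → ℂ) : ℝ :=
  Real.sqrt (∑' k : ℕ, ‖a k‖ ^ 2 * ((k : ℝ) + 1) ^ α)

/-- The inner product of `D_α`, on coefficient sequences. -/
def Dinner (α : ℝ) (a b : ℕ → ℂ) : ℂ :=
  ∑' k : ℕ, a k * (starRingEnd ℂ) (b k) * ((((k : ℝ) + 1) ^ α : ℝ) : ℂ)

/-- Cauchy product of coefficient sequences (coefficients of the product function). -/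
def mulCoeff (a b : ℕ → ℂ) : ℕ → ℂ :=
  fun k => ∑ i ∈ Finset.range (k + 1), a i * b (k - i)

/-- Coefficient sequence of the constant function `1`. -/
def oneCoeff : ℕ → ℂ := fun k => if k = 0 then 1 else 0

/-- `f` is cyclic for (the shift operator on) `D_α`: there are polynomials `p n` with
`‖p n · f - 1‖_α → 0`. -/
def Cyclic (α : ℝ) (f : ℕ → ℂ) : Prop :=
  ∃ p : ℕ → Polynomial ℂ,
    Tendsto (fun n => DNorm α (fun k => mulCoeff (p n).coeff f k - oneCoeff k)) atTop (𝓝 0)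

/-- Coefficients of `S^t f`, where `S` is the shift operator `(Sf)(z) = z f(z)`. -/
def shiftPow (t : ℕ) (a : ℕ → ℂ) : ℕ → ℂ :=
  fun k => if k < t then 0 else a (k - t)

/-- Operator norm of `S^t` on `D_α`. -/
def shiftOpNorm (α : ℝ) (t : ℕ) : ℝ :=
  sSup {r : ℝ | ∃ a : ℕ → ℂ, MemD α a ∧ DNorm α a ≤ 1 ∧ r = DNorm α (shiftPow t a)}

/-- `p` is a `d`-th optimal polynomial approximant to `1/f` in `D_α`. -/
def IsOPA (α : ℝ) (f : ℕ → ℂ) (d : ℕ) (p : Polynomial ℂ) : Prop :=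
  p.natDegree ≤ d ∧
    ∀ q : Polynomial ℂ, q.natDegree ≤ d →
      DNorm α (fun k => mulCoeff p.coeff f k - oneCoeff k) ≤
        DNorm α (fun k => mulCoeff q.coeff f k - oneCoeff k)

/-- The matrix `M` of the linear system determining the `d`-th o.p.a. to `1/f`:
`m_{j,k} = ⟨S^k f, S^j f⟩_α`. -/
def opaMatrix (α : ℝ) (d : ℕ) (f : ℕ → ℂ) : Matrix (Fin (d + 1)) (Fin (d + 1)) ℂ :=
  Matrix.of fun j k => Dinner α (shiftPow (k : ℕ) f) (shiftPow (j : ℕ) f)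

/-- The vector `b` of the linear system determining the `d`-th o.p.a. to `1/f`:
`b_j = ⟨1, S^j f⟩_α`. -/
def opaVec (α : ℝ) (d : ℕ) (f : ℕ → ℂ) : Fin (d + 1) → ℂ :=
  fun j => Dinner α oneCoeff (shiftPow (j : ℕ) f)

/-- Frobenius norm of a complex matrix. -/
def frobNorm {m n : ℕ} (M : Matrix (Fin m) (Fin n) ℂ) : ℝ :=
  Real.sqrt (∑ j, ∑ k, ‖M j k‖ ^ 2)

/-- Euclidean norm on `ℂ^m`. -/
def euclNorm {m : ℕ} (v : Fin m → ℂ) : ℝ :=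
  Real.sqrt (∑ j, ‖v j‖ ^ 2)

/-- `α`-weighted Frobenius norm: the Frobenius norm of the matrix in the orthonormal
basis `{z^k/(k+1)^{α/2}}` of the map whose matrix in `{z^k}` is `M`. -/
def wFrobNorm (α : ℝ) {m : ℕ} (M : Matrix (Fin m) (Fin m) ℂ) : ℝ :=
  Real.sqrt (∑ j, ∑ k, ‖M j k‖ ^ 2 * (((j : ℕ) : ℝ) + 1) ^ α * (((k : ℕ) : ℝ) + 1) ^ (-α))

/-- Coefficients of the reproducing kernel of `D_α` at `w ∈ 𝔻`. -/
def kern (α : ℝ) (w : ℂ) : ℕ → ℂ :=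
  fun k => (starRingEnd ℂ) w ^ k / ((((k : ℝ) + 1) ^ α : ℝ) : ℂ)

/-!
Let `f_N(z) = (1 - z)^N S(z)` with `S(z) = exp(-(1 + z)/(1 - z))` and `N` even and large compared
with `|α|`. Its Taylor coefficients `a_k` decay like `k^(-N/2)`, so they lie in `D_α` and in
`D_{-α}`. The function `f_N` has no zeros in the disc, so each dilation `f_N(r z)` with `r < 1` has
an inverse that is analytic past the closed disc and is therefore cyclic; these dilations converge
to `f_N` in `D_α` as `r → 1`.

That `f_N` is not cyclic is due to the singular inner factor `S`: since `S(z) S(1/z) = 1`, the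
product `f_N(z) f_N(1/z) = (1 - z)^N (1 - 1/z)^N` is a Laurent polynomial of degree `N`, that is,
`c_j := ∑ a_k a_{k+j}` vanishes for `j > N`. So the functional `g ↦ ∑ g_k a_{k+N+1}`, which is
bounded on `D_α`, kills every polynomial multiple of `f_N` but sends `1` to `a_{N+1} ≠ 0`.
No boundary values are needed for the vanishing of `c_j`: the differential equation of `f_N` gives
`(j + 1 + N) c_{j+1} = (j - N) c_j`, which annihilates `c_{N+1}` and then all later ones.
-/

lemma memD_oneCoeff (α : ℝ) : MemD α oneCoeff :=
  summable_of_ne_finset_zero (s := {0}) fun k hk => by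
    simp [oneCoeff, Finset.notMem_singleton.mp hk]

lemma weight_add_le (α : ℝ) (k t : ℕ) :
    ((k : ℝ) + t + 1) ^ α ≤ ((t : ℝ) + 1) ^ |α| * ((k : ℝ) + 1) ^ α := by
  rcases le_total 0 α with hα | hα
  · rw [abs_of_nonneg hα, ← Real.mul_rpow (by positivity) (by positivity)]
    gcongr
    nlinarith [mul_nonneg (Nat.cast_nonneg (α := ℝ) k) (Nat.cast_nonneg (α := ℝ) t)]
  · calc ((k : ℝ) + t + 1) ^ α ≤ 1 * ((k : ℝ) + 1) ^ α := by
          rw [one_mul]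
          exact Real.rpow_le_rpow_of_nonpos (by positivity) (by simp) hα
      _ ≤ ((t : ℝ) + 1) ^ |α| * ((k : ℝ) + 1) ^ α := by
          gcongr
          exact Real.one_le_rpow (by simp) (abs_nonneg α)

namespace MemD

variable {α : ℝ} {a b : ℕ → ℂ}

lemma mono (hb : MemD α b) (hab : ∀ k, ‖a k‖ ≤ ‖b k‖) : MemD α a :=
  Summable.of_nonneg_of_le (fun k => by positivity) (fun k => by gcongr; exact hab k) hb

lemma const_mul (c : ℂ) (ha : MemD α a) : MemD α fun k => c * a k :=
  (Summable.mul_left (‖c‖ ^ 2) ha).congr fun k => by rw [norm_mul]; ring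

lemma add (ha : MemD α a) (hb : MemD α b) : MemD α fun k => a k + b k := by
  refine Summable.of_nonneg_of_le (fun k => by positivity) (fun k => ?_)
    ((Summable.add ha hb).mul_left 2)
  have hsq : ‖a k + b k‖ ^ 2 ≤ 2 * (‖a k‖ ^ 2 + ‖b k‖ ^ 2) :=
    (pow_le_pow_left₀ (norm_nonneg _) (norm_add_le _ _) 2).trans add_sq_le
  calc ‖a k + b k‖ ^ 2 * ((k : ℝ) + 1) ^ α
      ≤ 2 * (‖a k‖ ^ 2 + ‖b k‖ ^ 2) * ((k : ℝ) + 1) ^ α := by gcongr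
    _ = 2 * (‖a k‖ ^ 2 * ((k : ℝ) + 1) ^ α + ‖b k‖ ^ 2 * ((k : ℝ) + 1) ^ α) := by ring

lemma sub (ha : MemD α a) (hb : MemD α b) : MemD α fun k => a k - b k := by
  simpa [sub_eq_add_neg] using ha.add (hb.const_mul (-1))

lemma shiftPow (t : ℕ) (ha : MemD α a) : MemD α (shiftPow t a) := by
  refine (summable_nat_add_iff t).mp (Summable.of_nonneg_of_le (fun k => by positivity)
    (fun k => ?_) (Summable.mul_left (((t : ℝ) + 1) ^ |α|) ha))
  simp only [_root_.shiftPow, Nat.not_lt.mpr (Nat.le_add_left t k), if_false,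
    Nat.add_sub_cancel_right, Nat.cast_add]
  calc ‖a k‖ ^ 2 * ((k : ℝ) + t + 1) ^ α
      ≤ ‖a k‖ ^ 2 * (((t : ℝ) + 1) ^ |α| * ((k : ℝ) + 1) ^ α) := by
        gcongr; exact weight_add_le α k t
    _ = ((t : ℝ) + 1) ^ |α| * (‖a k‖ ^ 2 * ((k : ℝ) + 1) ^ α) := by ring

end MemD

lemma tendsto_DNorm_zero_of_dominated {ι : Type*} {l : Filter ι} {α : ℝ} {u : ι → ℕ → ℂ}
    {b : ℕ → ℂ} (hb : MemD α b) (hub : ∀ᶠ i in l, ∀ k, ‖u i k‖ ≤ ‖b k‖)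
    (hu : ∀ k, Tendsto (fun i => u i k) l (𝓝 0)) :
    Tendsto (fun i => DNorm α (u i)) l (𝓝 0) := by
  have htsum : Tendsto (fun i => ∑' k, ‖u i k‖ ^ 2 * ((k : ℝ) + 1) ^ α) l
      (𝓝 (∑' _ : ℕ, (0 : ℝ))) := by
    refine tendsto_tsum_of_dominated_convergence hb (fun k => ?_) ?_
    · simpa using ((hu k).norm.pow 2).mul_const (((k : ℝ) + 1) ^ α)
    · filter_upwards [hub] with i hi k
      rw [Real.norm_of_nonneg (by positivity)]
      gcongr
      exact hi k
  simpa [DNorm] using htsum.sqrt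

section Duality

variable {α : ℝ} {a b : ℕ → ℂ}

lemma weight_half_mul_weight_neg_half (α : ℝ) (k : ℕ) :
    ((k : ℝ) + 1) ^ (α / 2) * ((k : ℝ) + 1) ^ (-α / 2) = 1 := by
  rw [← Real.rpow_add (by positivity)]
  ring_nf
  exact Real.rpow_zero _

lemma mul_weight_half_sq (x : ℝ) (α : ℝ) (k : ℕ) :
    (x * ((k : ℝ) + 1) ^ (α / 2)) ^ (2 : ℝ) = x ^ 2 * ((k : ℝ) + 1) ^ α := by
  rw [Real.rpow_two, mul_pow, ← Real.rpow_mul_natCast (by positivity)]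
  norm_num

lemma norm_mul_eq_weighted (α : ℝ) (a b : ℕ → ℂ) (k : ℕ) :
    ‖a k * b k‖ = (‖a k‖ * ((k : ℝ) + 1) ^ (α / 2)) * (‖b k‖ * ((k : ℝ) + 1) ^ (-α / 2)) := by
  rw [mul_mul_mul_comm, weight_half_mul_weight_neg_half, mul_one, norm_mul]

lemma MemD.summable_norm_mul (ha : MemD α a) (hb : MemD (-α) b) :
    Summable fun k => ‖a k * b k‖ := by
  simp only [norm_mul_eq_weighted α]
  refine Real.summable_mul_of_Lp_Lq_of_nonneg .two_two (fun k => by positivity)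
    (fun k => by positivity) ?_ ?_
  · simpa only [mul_weight_half_sq, MemD] using ha
  · simpa only [mul_weight_half_sq, MemD] using hb

lemma MemD.norm_tsum_mul_le (ha : MemD α a) (hb : MemD (-α) b) :
    ‖∑' k, a k * b k‖ ≤ DNorm α a * DNorm (-α) b := by
  refine (norm_tsum_le_tsum_norm (ha.summable_norm_mul hb)).trans ?_
  have hholder := Real.inner_le_Lp_mul_Lq_tsum_of_nonneg .two_two
    (f := fun k : ℕ => ‖a k‖ * ((k : ℝ) + 1) ^ (α / 2))
    (g := fun k : ℕ => ‖b k‖ * ((k : ℝ) + 1) ^ (-α / 2))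
    (fun k => by positivity) (fun k => by positivity)
    (by simpa only [mul_weight_half_sq, MemD] using ha)
    (by simpa only [mul_weight_half_sq, MemD] using hb)
  simpa only [norm_mul_eq_weighted α, mul_weight_half_sq, DNorm, Real.sqrt_eq_rpow] using hholder

end Duality

section Multiplication

lemma mulCoeff_add_left (a a' b : ℕ → ℂ) (k : ℕ) :
    mulCoeff (fun i => a i + a' i) b k = mulCoeff a b k + mulCoeff a' b k := by
  simp only [mulCoeff, add_mul, Finset.sum_add_distrib]

lemma mulCoeff_sub_left (a a' b : ℕ → ℂ) (k : ℕ) :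
    mulCoeff (fun i => a i - a' i) b k = mulCoeff a b k - mulCoeff a' b k := by
  simp only [mulCoeff, sub_mul, Finset.sum_sub_distrib]

lemma mulCoeff_coeff_add (p q : Polynomial ℂ) (a : ℕ → ℂ) :
    mulCoeff (p + q).coeff a = fun k => mulCoeff p.coeff a k + mulCoeff q.coeff a k := by
  funext k
  rw [← mulCoeff_add_left]
  congr 1

lemma mulCoeff_coeff_monomial (t : ℕ) (c : ℂ) (a : ℕ → ℂ) :
    mulCoeff (Polynomial.monomial t c).coeff a = fun k => c * shiftPow t a k := by
  funext k
  simp only [mulCoeff, Polynomial.coeff_monomial, ite_mul, zero_mul, Finset.sum_ite_eq,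
    Finset.mem_range, shiftPow]
  split_ifs <;> first | rfl | omega | simp

lemma MemD.mulCoeff_coeff {α : ℝ} {a : ℕ → ℂ} (ha : MemD α a) (p : Polynomial ℂ) :
    MemD α (mulCoeff p.coeff a) := by
  induction p using Polynomial.induction_on' with
  | add p q hp hq => exact mulCoeff_coeff_add p q a ▸ hp.add hq
  | monomial t c => exact mulCoeff_coeff_monomial t c a ▸ (ha.shiftPow t).const_mul c

lemma hasSum_shiftPow_mul_iff {a b : ℕ → ℂ} {t : ℕ} {s : ℂ} :
    HasSum (fun k => shiftPow t a k * b k) s ↔ HasSum (fun k => a k * b (k + t)) s := by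
  have hinit : ∑ k ∈ Finset.range t, shiftPow t a k * b k = 0 :=
    Finset.sum_eq_zero fun k hk => by simp [shiftPow, Finset.mem_range.mp hk]
  rw [← hasSum_nat_add_iff' t, hinit, sub_zero]
  simp only [shiftPow, Nat.not_lt.mpr (Nat.le_add_left t _), if_false, Nat.add_sub_cancel_right]

lemma hasSum_mulCoeff_coeff_mul_zero {a b : ℕ → ℂ}
    (hab : ∀ t, HasSum (fun k => a k * b (k + t)) 0) (p : Polynomial ℂ) :
    HasSum (fun k => mulCoeff p.coeff a k * b k) 0 := by
  induction p using Polynomial.induction_on' with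
  | add p q hp hq => simpa [mulCoeff_coeff_add, add_mul] using hp.add hq
  | monomial t c =>
    simpa [mulCoeff_coeff_monomial, mul_assoc] using
      (hasSum_shiftPow_mul_iff.mpr (hab t)).mul_left c

lemma hasSum_oneCoeff_mul (b : ℕ → ℂ) : HasSum (fun k => oneCoeff k * b k) (b 0) := by
  convert hasSum_single 0 fun k (hk : k ≠ 0) => ?_ using 1
  · simp [oneCoeff]
  · simp [oneCoeff, hk]

end Multiplication

theorem not_cyclic_of_annihilator {α : ℝ} {a b : ℕ → ℂ} (ha : MemD α a) (hb : MemD (-α) b)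
    (hab : ∀ t, HasSum (fun k => a k * b (k + t)) 0) (hb0 : b 0 ≠ 0) : ¬ Cyclic α a := by
  rintro ⟨p, hp⟩
  have hbound : ∀ n, ‖b 0‖ ≤
      DNorm α (fun k => mulCoeff (p n).coeff a k - oneCoeff k) * DNorm (-α) b := by
    intro n
    have hsum := (hasSum_mulCoeff_coeff_mul_zero hab (p n)).sub (hasSum_oneCoeff_mul b)
    simp only [← sub_mul, zero_sub] at hsum
    rw [← norm_neg, ← hsum.tsum_eq]
    exact ((ha.mulCoeff_coeff (p n)).sub (memD_oneCoeff α)).norm_tsum_mul_le hb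
  have hlim := ge_of_tendsto' (hp.mul_const (DNorm (-α) b)) hbound
  rw [zero_mul] at hlim
  exact hb0 (norm_le_zero_iff.mp hlim)

section Majorant

/-- The sequence of moduli, used to dominate Cauchy products termwise. -/
def majorant (a : ℕ → ℂ) : ℕ → ℂ := fun k => (‖a k‖ : ℂ)

lemma norm_mulCoeff_le_majorant {a a' b b' : ℕ → ℂ} (ha : ∀ k, ‖a' k‖ ≤ ‖a k‖)
    (hb : ∀ k, ‖b' k‖ ≤ ‖b k‖) (k : ℕ) :
    ‖mulCoeff a' b' k‖ ≤ ‖mulCoeff (majorant a) (majorant b) k‖ := by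
  have hmaj : mulCoeff (majorant a) (majorant b) k =
      ((∑ i ∈ Finset.range (k + 1), ‖a i‖ * ‖b (k - i)‖ : ℝ) : ℂ) := by
    simp [mulCoeff, majorant]
  rw [hmaj, Complex.norm_real, Real.norm_of_nonneg (by positivity)]
  refine (norm_sum_le _ _).trans (Finset.sum_le_sum fun i _ => ?_)
  rw [norm_mul]
  gcongr
  exacts [ha i, hb (k - i)]

theorem cyclic_of_mulCoeff_eq_oneCoeff {α : ℝ} {a b : ℕ → ℂ}
    (hab : MemD α (mulCoeff (majorant b) (majorant a))) (hinv : mulCoeff b a = oneCoeff) :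
    Cyclic α a := by
  let p : ℕ → Polynomial ℂ := fun n => PowerSeries.trunc n (PowerSeries.mk b)
  have hcoeff : ∀ n k, (p n).coeff k = if k < n then b k else 0 := fun n k => by
    simp [p, PowerSeries.coeff_trunc]
  have herror : ∀ n k, mulCoeff (p n).coeff a k - oneCoeff k =
      mulCoeff (fun i => (p n).coeff i - b i) a k := fun n k => by
    rw [mulCoeff_sub_left, hinv]
  refine ⟨p, tendsto_DNorm_zero_of_dominated hab (.of_forall fun n k => ?_) fun k => ?_⟩
  · rw [herror]
    refine norm_mulCoeff_le_majorant (fun i => ?_) (fun i => le_rfl) k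
    rw [hcoeff]
    split_ifs <;> simp
  · refine tendsto_const_nhds.congr' ?_
    filter_upwards [eventually_gt_atTop k] with n hn
    rw [herror]
    refine (Finset.sum_eq_zero fun i hi => ?_).symm
    simp only [hcoeff, if_pos (show i < n by grind), sub_self, zero_mul]

end Majorant

section Dilation

/-- Coefficients of the dilated function `z ↦ f (r z)`. -/
def dilate (r : ℂ) (a : ℕ → ℂ) : ℕ → ℂ := fun k => a k * r ^ k

lemma mulCoeff_dilate (r : ℂ) (a b : ℕ → ℂ) :
    mulCoeff (dilate r a) (dilate r b) = dilate r (mulCoeff a b) := by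
  funext k
  simp only [mulCoeff, dilate, Finset.sum_mul]
  refine Finset.sum_congr rfl fun i hi => ?_
  rw [mul_mul_mul_comm, pow_mul_pow_sub r (Finset.mem_range_succ_iff.mp hi)]

lemma dilate_oneCoeff (r : ℂ) : dilate r oneCoeff = oneCoeff := by
  funext k
  rcases eq_or_ne k 0 with rfl | hk <;> simp [dilate, oneCoeff, *]

lemma majorant_dilate (r : ℂ) (a : ℕ → ℂ) : majorant (dilate r a) = dilate ‖r‖ (majorant a) := by
  funext k
  simp [majorant, dilate]

lemma norm_dilate_le {r : ℂ} (hr : ‖r‖ ≤ 1) (a : ℕ → ℂ) (k : ℕ) : ‖dilate r a k‖ ≤ ‖a k‖ := by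
  rw [dilate, norm_mul, norm_pow]
  exact mul_le_of_le_one_right (norm_nonneg _) (pow_le_one₀ (norm_nonneg _) hr)

lemma MemD.dilate {α : ℝ} {a : ℕ → ℂ} {r : ℂ} (hr : ‖r‖ ≤ 1) (ha : MemD α a) :
    MemD α (dilate r a) :=
  ha.mono (norm_dilate_le hr a)

theorem tendsto_DNorm_dilate_sub {α : ℝ} {a : ℕ → ℂ} (ha : MemD α a) :
    Tendsto (fun r => DNorm α fun k => dilate r a k - a k)
      (𝓝[Metric.closedBall 0 1] 1) (𝓝 0) := by
  refine tendsto_DNorm_zero_of_dominated (ha.const_mul 2) ?_ fun k => ?_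
  · filter_upwards [self_mem_nhdsWithin] with r hr k
    calc ‖dilate r a k - a k‖ ≤ ‖dilate r a k‖ + ‖a k‖ := norm_sub_le _ _
      _ ≤ ‖a k‖ + ‖a k‖ := by gcongr; exact norm_dilate_le (mem_closedBall_zero_iff.mp hr) a k
      _ = ‖2 * a k‖ := by rw [norm_mul, Complex.norm_ofNat, two_mul]
  · have hcont : Continuous fun r => dilate r a k - a k := by unfold dilate; fun_prop
    simpa [dilate] using hcont.continuousWithinAt.tendsto (x := (1 : ℂ))

lemma summable_weight_mul_geometric (α : ℝ) {x : ℝ} (hx0 : 0 ≤ x) (hx1 : x < 1) :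
    Summable fun k : ℕ => ((k : ℝ) + 1) ^ α * x ^ k := by
  obtain ⟨n, hn⟩ := exists_nat_ge α
  have hx : ‖x‖ < 1 := by rwa [Real.norm_of_nonneg hx0]
  have hpow := ((summable_pow_mul_geometric_of_norm_lt_one n hx).add
    (summable_geometric_of_lt_one hx0 hx1)).mul_left (2 ^ (n - 1))
  refine .of_nonneg_of_le (fun k => by positivity) (fun k => ?_) hpow
  calc ((k : ℝ) + 1) ^ α * x ^ k ≤ ((k : ℝ) + 1) ^ n * x ^ k := by
        gcongr
        rw [← Real.rpow_natCast]
        exact Real.rpow_le_rpow_of_exponent_le (by simp) hn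
    _ ≤ 2 ^ (n - 1) * ((k : ℝ) ^ n + 1 ^ n) * x ^ k := by
        gcongr
        exact add_pow_le k.cast_nonneg zero_le_one n
    _ = 2 ^ (n - 1) * ((k : ℝ) ^ n * x ^ k + x ^ k) := by rw [one_pow]; ring

/-- The power series with coefficients `a` converges on the open unit disc. -/
def ConvergesOnDisc (a : ℕ → ℂ) : Prop :=
  ∀ z : ℂ, ‖z‖ < 1 → Summable fun k => a k * z ^ k

namespace ConvergesOnDisc

variable {a b : ℕ → ℂ}

lemma majorant (ha : ConvergesOnDisc a) : ConvergesOnDisc (majorant a) := fun z hz => by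
  refine .of_norm ((ha ‖z‖ (by simpa using hz)).norm.congr fun k => ?_)
  simp [_root_.majorant]

lemma mulCoeff (ha : ConvergesOnDisc a) (hb : ConvergesOnDisc b) :
    ConvergesOnDisc (mulCoeff a b) := fun z hz => by
  have hprod := (summable_norm_sum_mul_range_of_summable_norm (ha z hz).norm (hb z hz).norm).of_norm
  exact hprod.congr fun k => congrFun (mulCoeff_dilate z a b) k

lemma memD_dilate (ha : ConvergesOnDisc a) (α : ℝ) {r : ℂ} (hr : ‖r‖ < 1) :
    MemD α (dilate r a) := by
  obtain ⟨ρ, hρ0, hρ⟩ : ∃ ρ : ℝ, 0 ≤ ρ ∧ ρ ^ 2 = ‖r‖ :=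
    ⟨√‖r‖, Real.sqrt_nonneg _, Real.sq_sqrt (norm_nonneg r)⟩
  have hρ1 : ‖(ρ : ℂ)‖ < 1 := by
    rw [Complex.norm_of_nonneg hρ0]
    exact (sq_lt_one_iff₀ hρ0).mp (hρ ▸ hr)
  obtain ⟨C, hC⟩ := (ha ρ hρ1).tendsto_atTop_zero.norm.bddAbove_range
  have hbound : ∀ k, ‖a k‖ * ρ ^ k ≤ C := fun k => by
    simpa [abs_of_nonneg hρ0] using hC (Set.mem_range_self k)
  refine .of_nonneg_of_le (fun k => by positivity) (fun k => ?_)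
    ((summable_weight_mul_geometric α (norm_nonneg r) hr).mul_left (C ^ 2))
  calc ‖dilate r a k‖ ^ 2 * ((k : ℝ) + 1) ^ α
      = (‖a k‖ * ρ ^ k) ^ 2 * (((k : ℝ) + 1) ^ α * ‖r‖ ^ k) := by
        rw [dilate, norm_mul, norm_pow, ← hρ]; ring
    _ ≤ C ^ 2 * (((k : ℝ) + 1) ^ α * ‖r‖ ^ k) := by gcongr; exact hbound k

theorem cyclic_dilate (ha : ConvergesOnDisc a) (hb : ConvergesOnDisc b)
    (hinv : _root_.mulCoeff b a = oneCoeff) (α : ℝ) {r : ℂ} (hr : ‖r‖ < 1) :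
    Cyclic α (dilate r a) := by
  refine cyclic_of_mulCoeff_eq_oneCoeff (b := dilate r b) ?_ ?_
  · rw [majorant_dilate, majorant_dilate, mulCoeff_dilate]
    exact (hb.majorant.mulCoeff ha.majorant).memD_dilate α (by simpa using hr)
  · rw [mulCoeff_dilate, hinv, dilate_oneCoeff]

end ConvergesOnDisc

end Dilation

section TaylorCoefficients

open Metric

/-- The Taylor coefficients of `F` at the origin. -/
def taylorCoeff (F : ℂ → ℂ) : ℕ → ℂ := fun k => (k.factorial : ℂ)⁻¹ * iteratedDeriv k F 0

variable {F G : ℂ → ℂ}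

lemma hasSum_taylorCoeff (hF : DifferentiableOn ℂ F (ball 0 1)) {z : ℂ} (hz : ‖z‖ < 1) :
    HasSum (fun k => taylorCoeff F k * z ^ k) (F z) := by
  refine (Complex.hasSum_taylorSeries_on_ball hF (mem_ball_zero_iff.mpr hz)).congr_fun fun k => ?_
  simp only [taylorCoeff, sub_zero, smul_eq_mul]
  ring

lemma convergesOnDisc_taylorCoeff (hF : DifferentiableOn ℂ F (ball 0 1)) :
    ConvergesOnDisc (taylorCoeff F) :=
  fun _ hz => (hasSum_taylorCoeff hF hz).summable

lemma taylorCoeff_congr (hFG : F =ᶠ[𝓝 0] G) : taylorCoeff F = taylorCoeff G := by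
  funext k
  rw [taylorCoeff, taylorCoeff, hFG.iteratedDeriv_eq k]

lemma taylorCoeff_zero (F : ℂ → ℂ) : taylorCoeff F 0 = F 0 := by
  simp [taylorCoeff]

lemma taylorCoeff_const_one : taylorCoeff (fun _ => 1) = oneCoeff := by
  funext k
  rcases eq_or_ne k 0 with rfl | hk <;> simp [taylorCoeff, oneCoeff, iteratedDeriv_const, *]

lemma taylorCoeff_sub (hF : AnalyticAt ℂ F 0) (hG : AnalyticAt ℂ G 0) (k : ℕ) :
    taylorCoeff (fun z => F z - G z) k = taylorCoeff F k - taylorCoeff G k := by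
  rw [taylorCoeff, iteratedDeriv_fun_sub hF.contDiffAt hG.contDiffAt, mul_sub]
  rfl

lemma taylorCoeff_const_mul (c : ℂ) (F : ℂ → ℂ) (k : ℕ) :
    taylorCoeff (fun z => c * F z) k = c * taylorCoeff F k := by
  rw [taylorCoeff, iteratedDeriv_const_mul_field, mul_left_comm]
  rfl

lemma taylorCoeff_mul (hF : AnalyticAt ℂ F 0) (hG : AnalyticAt ℂ G 0) :
    taylorCoeff (fun z => F z * G z) = mulCoeff (taylorCoeff F) (taylorCoeff G) := by
  funext k
  simp only [taylorCoeff, mulCoeff, iteratedDeriv_fun_mul hF.contDiffAt hG.contDiffAt,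
    Finset.mul_sum]
  refine Finset.sum_congr rfl fun i hi => ?_
  rw [Nat.cast_choose ℂ (Finset.mem_range_succ_iff.mp hi)]
  field_simp [Nat.factorial_ne_zero]

lemma taylorCoeff_deriv (F : ℂ → ℂ) (k : ℕ) :
    taylorCoeff (deriv F) k = (k + 1) * taylorCoeff F (k + 1) := by
  have hk : (k : ℂ) + 1 ≠ 0 := k.cast_add_one_ne_zero
  rw [taylorCoeff, taylorCoeff, iteratedDeriv_succ', Nat.factorial_succ]
  push_cast
  field_simp

lemma taylorCoeff_id_mul_succ (hF : AnalyticAt ℂ F 0) (k : ℕ) :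
    taylorCoeff (fun z => z * F z) (k + 1) = taylorCoeff F k := by
  have hid : ∀ i, taylorCoeff (fun z => z) i = if i = 1 then 1 else 0 := fun i => by
    by_cases hi : i = 1 <;> simp [taylorCoeff, iteratedDeriv_fun_id_zero, hi]
  rw [taylorCoeff_mul (F := fun z => z) analyticAt_id hF, mulCoeff, Finset.sum_eq_single 1] <;>
    simp +contextual [hid]

lemma taylorCoeff_one_sub_mul_succ (hF : AnalyticAt ℂ F 0) (k : ℕ) :
    taylorCoeff (fun z => (1 - z) * F z) (k + 1) = taylorCoeff F (k + 1) - taylorCoeff F k := by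
  simp only [sub_mul, one_mul]
  rw [taylorCoeff_sub (G := fun z => z * F z) hF (analyticAt_id.mul hF), taylorCoeff_id_mul_succ hF]

lemma norm_taylorCoeff_le {C : ℝ} (hF : DifferentiableOn ℂ F (ball 0 1))
    (hC : ∀ z, ‖z‖ < 1 → ‖F z‖ ≤ C) (k : ℕ) : ‖taylorCoeff F k‖ ≤ C := by
  have hcauchy : ∀ r ∈ Set.Ioo (0 : ℝ) 1, ‖taylorCoeff F k‖ * r ^ k ≤ C := by
    rintro r ⟨hr0, hr1⟩
    have hiter := Complex.norm_iteratedDeriv_le_of_forall_mem_sphere_norm_le k hr0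
      ((hF.mono (closedBall_subset_ball hr1)).diffContOnCl_ball subset_rfl)
      fun z hz => hC z ((mem_sphere_zero_iff_norm.mp hz).trans_lt hr1)
    rw [taylorCoeff, norm_mul, norm_inv, Complex.norm_natCast]
    rw [le_div_iff₀ (by positivity)] at hiter
    rw [mul_assoc, inv_mul_le_iff₀ (by positivity)]
    exact hiter
  have hlim : Tendsto (fun r : ℝ => ‖taylorCoeff F k‖ * r ^ k) (𝓝[<] 1)
      (𝓝 (‖taylorCoeff F k‖ * 1 ^ k)) :=
    ((continuous_const.mul (continuous_pow k)).tendsto 1).mono_left nhdsWithin_le_nhds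
  rw [one_pow, mul_one] at hlim
  exact le_of_tendsto hlim (eventually_of_mem (Ioo_mem_nhdsLT zero_lt_one) hcauchy)

theorem cyclic_dilate_taylorCoeff (hF : DifferentiableOn ℂ F (ball 0 1))
    (hF0 : ∀ z, ‖z‖ < 1 → F z ≠ 0) (α : ℝ) {r : ℂ} (hr : ‖r‖ < 1) :
    Cyclic α (dilate r (taylorCoeff F)) := by
  have hball : ball (0 : ℂ) 1 ∈ 𝓝 0 := ball_mem_nhds 0 one_pos
  have hinv : DifferentiableOn ℂ (fun z => (F z)⁻¹) (ball 0 1) :=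
    hF.fun_inv fun z hz => hF0 z (mem_ball_zero_iff.mp hz)
  refine (convergesOnDisc_taylorCoeff hF).cyclic_dilate (convergesOnDisc_taylorCoeff hinv) ?_ α hr
  rw [← taylorCoeff_mul (hinv.analyticAt hball) (hF.analyticAt hball), ← taylorCoeff_const_one]
  refine taylorCoeff_congr (eventually_of_mem hball fun z hz => ?_)
  exact inv_mul_cancel₀ (hF0 z (mem_ball_zero_iff.mp hz))

end TaylorCoefficients

section Correlation

/-- Coefficients of `z f'(z)`, the Euler derivative of `f`. -/
def eulerDeriv (a : ℕ → ℂ) : ℕ → ℂ := fun k => k * a k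

/-- The coefficient of `z ^ j` in the Laurent series of `f(1/z) g(z)` on the unit circle, where
`f` and `g` have coefficients `x` and `y`. There is no complex conjugation. -/
def correlation (x y : ℕ → ℂ) (j : ℕ) : ℂ := ∑' k, x k * y (k + j)

variable {x y a : ℕ → ℂ} {M : ℂ}

lemma hasSum_correlation (hx : Summable fun k => ‖x k‖) (hy : Summable fun k => ‖y k‖) (j : ℕ) :
    HasSum (fun k => x k * y (k + j)) (correlation x y j) :=
  ((summable_mul_of_summable_norm hx hy).comp_injective (i := fun k => (k, k + j))
    fun _ _ h => congrArg Prod.fst h).hasSum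

lemma tendsto_correlation_zero (hx : Summable fun k => ‖x k‖) (hy : Summable fun k => ‖y k‖) :
    Tendsto (correlation x y) atTop (𝓝 0) := by
  have hy0 : Tendsto y atTop (𝓝 0) := hy.of_norm.tendsto_atTop_zero
  obtain ⟨C, hC⟩ := hy0.norm.bddAbove_range
  rw [← tsum_zero (β := ℕ)]
  refine tendsto_tsum_of_dominated_convergence (hx.mul_right C) (fun k => ?_)
    (.of_forall fun j k => ?_)
  · rw [← mul_zero (x k)]
    exact (hy0.comp (tendsto_add_atTop_nat k |>.congr fun j => add_comm j k)).const_mul (x k)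
  · rw [norm_mul]
    gcongr
    exact hC (Set.mem_range_self (k + j))

lemma summable_norm_of_summable_norm_eulerDeriv (ha : Summable fun k => ‖eulerDeriv a k‖) :
    Summable fun k => ‖a k‖ := by
  refine (summable_nat_add_iff 1).mp (Summable.of_nonneg_of_le (fun k => norm_nonneg _)
    (fun k => ?_) ((summable_nat_add_iff 1).mpr ha))
  rw [eulerDeriv, norm_mul, Complex.norm_natCast]
  exact le_mul_of_one_le_left (norm_nonneg _) (by simp)

lemma correlation_eulerDeriv_sub (ha : Summable fun k => ‖eulerDeriv a k‖) (j : ℕ) :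
    correlation a (eulerDeriv a) j - correlation (eulerDeriv a) a j = j * correlation a a j := by
  have hsum := summable_norm_of_summable_norm_eulerDeriv ha
  refine ((hasSum_correlation hsum ha j).sub (hasSum_correlation ha hsum j)).unique
    (((hasSum_correlation hsum hsum j).mul_left (j : ℂ)).congr_fun fun k => ?_)
  simp only [eulerDeriv]
  push_cast
  ring

/-- The differential equation `(1 - z)² f'(z) = -(M (1 - z) + 2) f(z)`, whose solutions are the
multiples of `(1 - z)^M exp(-(1 + z)/(1 - z))`, in terms of the coefficients `a` of `f`. The first
field compares constant coefficients, the second those of `z ^ (k + 1)`. -/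
structure SatisfiesAtomicODE (M : ℂ) (a : ℕ → ℂ) : Prop where
  apply_one : a 1 = -(M + 2) * a 0
  three_term : ∀ k, eulerDeriv a (k + 2) - 2 * eulerDeriv a (k + 1) + eulerDeriv a k =
    -(M + 2) * a (k + 1) + M * a k

lemma correlation_self_eulerDeriv (ha : Summable fun k => ‖eulerDeriv a k‖)
    (hode : SatisfiesAtomicODE M a) (j : ℕ) :
    correlation a (eulerDeriv a) (j + 2) - 2 * correlation a (eulerDeriv a) (j + 1) +
        correlation a (eulerDeriv a) j =
      -(M + 2) * correlation a a (j + 1) + M * correlation a a j := by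
  have hsum := summable_norm_of_summable_norm_eulerDeriv ha
  have hleft := ((hasSum_correlation hsum ha (j + 2)).sub
    ((hasSum_correlation hsum ha (j + 1)).mul_left 2)).add (hasSum_correlation hsum ha j)
  have hright := ((hasSum_correlation hsum hsum (j + 1)).mul_left (-(M + 2))).add
    ((hasSum_correlation hsum hsum j).mul_left M)
  refine hleft.unique (hright.congr_fun fun k => ?_)
  linear_combination a k * hode.three_term (k + j)

lemma correlation_eulerDeriv_self (ha : Summable fun k => ‖eulerDeriv a k‖)
    (hode : SatisfiesAtomicODE M a) (j : ℕ) :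
    correlation (eulerDeriv a) a (j + 2) - 2 * correlation (eulerDeriv a) a (j + 1) +
        correlation (eulerDeriv a) a j =
      -(M + 2) * correlation a a (j + 1) + M * correlation a a (j + 2) := by
  have hsum := summable_norm_of_summable_norm_eulerDeriv ha
  have hleft := ((hasSum_correlation ha hsum (j + 2)).sub (((hasSum_nat_add_iff' 1).mpr
    (hasSum_correlation ha hsum (j + 1))).mul_left 2)).add
    ((hasSum_nat_add_iff' 2).mpr (hasSum_correlation ha hsum j))
  have hright := (((hasSum_nat_add_iff' 1).mpr
    (hasSum_correlation hsum hsum (j + 1))).mul_left (-(M + 2))).add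
    ((hasSum_correlation hsum hsum (j + 2)).mul_left M)
  have heq := hleft.unique (hright.congr_fun fun k => by
    rw [show k + 1 + (j + 1) = k + (j + 2) by ring, show k + 2 + j = k + (j + 2) by ring]
    linear_combination a (k + (j + 2)) * hode.three_term k)
  simp only [Finset.sum_range_succ, Finset.sum_range_zero, eulerDeriv, zero_add, add_comm 1 j,
    hode.apply_one, Nat.cast_zero, Nat.cast_one] at heq ⊢
  linear_combination heq

lemma correlation_self_add_two (ha : Summable fun k => ‖eulerDeriv a k‖)
    (hode : SatisfiesAtomicODE M a) (j : ℕ) :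
    (j + 2 + M) * correlation a a (j + 2) - (j + 1 - M) * correlation a a (j + 1) =
      (j + 1 + M) * correlation a a (j + 1) - (j - M) * correlation a a j := by
  have hsub0 := correlation_eulerDeriv_sub ha j
  have hsub1 := correlation_eulerDeriv_sub ha (j + 1)
  have hsub2 := correlation_eulerDeriv_sub ha (j + 2)
  push_cast at hsub1 hsub2
  linear_combination correlation_self_eulerDeriv ha hode j - correlation_eulerDeriv_self ha hode j
    - hsub2 + 2 * hsub1 - hsub0

lemma tendsto_natCast_mul_correlation_self (ha : Summable fun k => ‖eulerDeriv a k‖) :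
    Tendsto (fun j : ℕ => j * correlation a a j) atTop (𝓝 0) := by
  have hsum := summable_norm_of_summable_norm_eulerDeriv ha
  rw [← sub_zero (0 : ℂ)]
  exact ((tendsto_correlation_zero hsum ha).sub (tendsto_correlation_zero ha hsum)).congr
    (correlation_eulerDeriv_sub ha)

theorem correlation_self_succ (ha : Summable fun k => ‖eulerDeriv a k‖)
    (hode : SatisfiesAtomicODE M a) (j : ℕ) :
    (j + 1 + M) * correlation a a (j + 1) = (j - M) * correlation a a j := by
  let d : ℕ → ℂ := fun j =>
    (j + 1 + M) * correlation a a (j + 1) - (j - M) * correlation a a j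
  have hconst : ∀ j, d j = d 0 := fun j => by
    induction j with
    | zero => rfl
    | succ j ih =>
      rw [← ih]
      simp only [d, ← correlation_self_add_two ha hode j]
      push_cast
      ring
  have hlim : Tendsto d atTop (𝓝 0) := by
    have hsum := summable_norm_of_summable_norm_eulerDeriv ha
    have hc := (tendsto_correlation_zero hsum hsum).const_mul M
    have hjc := tendsto_natCast_mul_correlation_self ha
    have hdiff := ((hjc.add hc).comp (tendsto_add_atTop_nat 1)).sub (hjc.sub hc)
    simp only [mul_zero, add_zero, sub_zero] at hdiff
    refine hdiff.congr fun j => ?_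
    simp only [d, Function.comp_apply]
    push_cast
    ring
  have hd0 : d 0 = 0 := tendsto_nhds_unique (tendsto_const_nhds.congr fun j => (hconst j).symm) hlim
  exact sub_eq_zero.mp ((hconst j).trans hd0)

theorem correlation_self_eq_zero {N : ℕ} (ha : Summable fun k => ‖eulerDeriv a k‖)
    (hode : SatisfiesAtomicODE N a) {j : ℕ} (hj : N < j) : correlation a a j = 0 := by
  have hstep : ∀ i : ℕ, (i - N : ℂ) * correlation a a i = 0 → correlation a a (i + 1) = 0 := by
    intro i hi
    rw [← correlation_self_succ ha hode] at hi
    exact (mul_eq_zero.mp hi).resolve_left (mod_cast (by positivity : i + 1 + N ≠ 0))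
  induction j, hj using Nat.le_induction with
  | base => exact hstep N (by simp)
  | succ i _ ih => exact hstep i (by rw [ih, mul_zero])

end Correlation

section SmoothedInner

open Metric

/-- The singular inner function whose singular measure is a point mass at `1`. -/
def atomicInner (z : ℂ) : ℂ := Complex.exp (-((1 + z) / (1 - z)))

/-- The singular inner function `atomicInner`, smoothed at its singularity by a zero of order
`N` at the boundary point `1`. -/
def smoothedInner (N : ℕ) (z : ℂ) : ℂ := (1 - z) ^ N * atomicInner z

/-- The Taylor coefficients of `smoothedInner N`. -/
def smoothedCoeff (N : ℕ) : ℕ → ℂ := taylorCoeff (smoothedInner N)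

lemma ne_one_of_norm_lt_one {z : ℂ} (hz : ‖z‖ < 1) : z ≠ 1 := by
  rintro rfl
  simp at hz

lemma hasDerivAt_atomicInner {z : ℂ} (hz : z ≠ 1) :
    HasDerivAt atomicInner (-2 / (1 - z) ^ 2 * atomicInner z) z := by
  have hz' : 1 - z ≠ 0 := sub_ne_zero.mpr hz.symm
  have hexponent : HasDerivAt (fun z : ℂ => -((1 + z) / (1 - z))) (-2 / (1 - z) ^ 2) z := by
    convert! (((hasDerivAt_id z).const_add 1).div ((hasDerivAt_id z).const_sub 1) hz').neg using 1
    simp only [id]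
    ring
  exact mul_comm (atomicInner z) _ ▸ hexponent.cexp

lemma norm_atomicInner_le_one {z : ℂ} (hz : ‖z‖ < 1) : ‖atomicInner z‖ ≤ 1 := by
  have hre : ((1 + z) / (1 - z)).re = (1 - ‖z‖ ^ 2) / Complex.normSq (1 - z) := by
    rw [Complex.div_re, ← add_div, ← Complex.normSq_eq_norm_sq, Complex.normSq_apply z]
    simp only [Complex.add_re, Complex.one_re, Complex.sub_re, Complex.add_im, Complex.one_im,
      Complex.sub_im]
    ring
  rw [atomicInner, Complex.norm_exp, Real.exp_le_one_iff, Complex.neg_re, neg_nonpos, hre]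
  exact div_nonneg (by nlinarith [norm_nonneg z]) (Complex.normSq_nonneg _)

lemma hasDerivAt_smoothedInner (N : ℕ) {z : ℂ} (hz : z ≠ 1) :
    HasDerivAt (smoothedInner (N + 2))
      (-(N + 2) * smoothedInner (N + 1) z - 2 * smoothedInner N z) z := by
  have hz' : 1 - z ≠ 0 := sub_ne_zero.mpr hz.symm
  convert! (((hasDerivAt_id z).const_sub 1).pow (N + 2)).mul (hasDerivAt_atomicInner hz) using 1
  simp only [smoothedInner, id, Pi.pow_apply]
  push_cast
  field_simp
  ring

lemma differentiableOn_smoothedInner (N : ℕ) :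
    DifferentiableOn ℂ (smoothedInner N) (ball 0 1) := fun _ hz =>
  (((differentiableAt_id.const_sub 1).pow N).mul (hasDerivAt_atomicInner (ne_one_of_norm_lt_one
    (mem_ball_zero_iff.mp hz))).differentiableAt).differentiableWithinAt

lemma analyticAt_smoothedInner (N : ℕ) : AnalyticAt ℂ (smoothedInner N) 0 :=
  (differentiableOn_smoothedInner N).analyticAt (ball_mem_nhds 0 one_pos)

lemma smoothedInner_ne_zero (N : ℕ) {z : ℂ} (hz : ‖z‖ < 1) : smoothedInner N z ≠ 0 :=
  mul_ne_zero (pow_ne_zero _ (sub_ne_zero.mpr (ne_one_of_norm_lt_one hz).symm))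
    (Complex.exp_ne_zero _)

end SmoothedInner

section Recurrences

lemma norm_smoothedCoeff_zero_le_one (k : ℕ) : ‖smoothedCoeff 0 k‖ ≤ 1 :=
  norm_taylorCoeff_le (differentiableOn_smoothedInner 0)
    (fun z hz => by simpa [smoothedInner] using norm_atomicInner_le_one hz) k

lemma smoothedCoeff_apply_zero (N : ℕ) : smoothedCoeff N 0 = atomicInner 0 := by
  simp [smoothedCoeff, taylorCoeff_zero, smoothedInner]

lemma smoothedCoeff_succ_succ (N k : ℕ) :
    smoothedCoeff (N + 1) (k + 1) = smoothedCoeff N (k + 1) - smoothedCoeff N k := by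
  have hsucc : smoothedInner (N + 1) = fun z => (1 - z) * smoothedInner N z := by
    funext z
    simp only [smoothedInner, pow_succ', mul_assoc]
  rw [smoothedCoeff, hsucc, taylorCoeff_one_sub_mul_succ (analyticAt_smoothedInner N)]
  rfl

lemma succ_mul_smoothedCoeff_add_two (N k : ℕ) :
    (k + 1) * smoothedCoeff (N + 2) (k + 1) =
      -(N + 2) * smoothedCoeff (N + 1) k - 2 * smoothedCoeff N k := by
  have hderiv : deriv (smoothedInner (N + 2)) =ᶠ[𝓝 0]
      fun z => -(N + 2) * smoothedInner (N + 1) z - 2 * smoothedInner N z := by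
    filter_upwards [Metric.ball_mem_nhds (0 : ℂ) one_pos] with z hz
    exact (hasDerivAt_smoothedInner N (ne_one_of_norm_lt_one (mem_ball_zero_iff.mp hz))).deriv
  rw [smoothedCoeff, ← taylorCoeff_deriv, taylorCoeff_congr hderiv,
    taylorCoeff_sub (F := fun z => -(N + 2) * smoothedInner (N + 1) z)
      (G := fun z => 2 * smoothedInner N z) (analyticAt_const.mul (analyticAt_smoothedInner _))
      (analyticAt_const.mul (analyticAt_smoothedInner _)),
    taylorCoeff_const_mul, taylorCoeff_const_mul]
  rfl

lemma smoothedCoeff_one (N : ℕ) : smoothedCoeff N 1 = -(N + 2) * smoothedCoeff N 0 := by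
  have hrec := succ_mul_smoothedCoeff_add_two N 0
  simp only [smoothedCoeff_succ_succ _ 0, smoothedCoeff_apply_zero, Nat.cast_zero] at hrec ⊢
  linear_combination hrec

lemma satisfiesAtomicODE_smoothedCoeff (N : ℕ) : SatisfiesAtomicODE N (smoothedCoeff N) where
  apply_one := smoothedCoeff_one N
  three_term k := by
    have hrec := succ_mul_smoothedCoeff_add_two N (k + 1)
    simp only [smoothedCoeff_succ_succ] at hrec
    simp only [eulerDeriv]
    push_cast at hrec ⊢
    linear_combination hrec

lemma smoothedCoeff_self_succ_ne_zero (N : ℕ) : smoothedCoeff N (N + 1) ≠ 0 := by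
  induction N with
  | zero =>
    rw [smoothedCoeff_one, smoothedCoeff_apply_zero]
    exact mul_ne_zero (by norm_num) (Complex.exp_ne_zero _)
  | succ N ih =>
    have hrec := succ_mul_smoothedCoeff_add_two N (N + 1)
    rw [smoothedCoeff_succ_succ (N + 1)] at hrec
    have hstep : (N + 2) * smoothedCoeff (N + 1) (N + 2) = -2 * smoothedCoeff N (N + 1) := by
      push_cast at hrec
      linear_combination hrec
    intro hzero
    rw [hzero, mul_zero] at hstep
    exact mul_ne_zero (by norm_num) ih hstep.symm

end Recurrences

section Decay

open Asymptotics

lemma isEquivalent_natCast_add (c : ℝ) : (fun k : ℕ => (k : ℝ) + c) ~[atTop] fun k => (k : ℝ) :=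
  IsEquivalent.refl.add_isLittleO
    (isLittleO_const_left.mpr (.inr (tendsto_norm_atTop_atTop.comp tendsto_natCast_atTop_atTop)))

lemma isTheta_natCast_add_rpow (c s : ℝ) :
    (fun k : ℕ => ((k : ℝ) + c) ^ s) =Θ[atTop] fun k => (k : ℝ) ^ s :=
  ((isEquivalent_natCast_add c).rpow fun k => k.cast_nonneg).isTheta

lemma isBigO_rpow_comp_add_iff {a : ℕ → ℂ} {s : ℝ} (t : ℕ) :
    ((fun k => a (k + t)) =O[atTop] fun k => (k : ℝ) ^ s) ↔
      a =O[atTop] fun k => (k : ℝ) ^ s := by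
  conv_rhs => rw [← map_add_atTop_eq_nat t, isBigO_map]
  rw [← (isTheta_natCast_add_rpow t s).isBigO_congr_right]
  simp only [Function.comp_def, Nat.cast_add]

lemma memD_of_isBigO {a : ℕ → ℂ} {s α : ℝ} (ha : a =O[atTop] fun k => (k : ℝ) ^ (-s))
    (hs : α + 1 < 2 * s) : MemD α a := by
  refine summable_of_isBigO_nat (Real.summable_nat_rpow.mpr (show α - 2 * s < -1 by linarith)) ?_
  refine ((ha.norm_left.pow 2).mul (isTheta_natCast_add_rpow 1 α).isBigO).congr' .rfl ?_
  filter_upwards [eventually_gt_atTop 0] with k hk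
  have hk' : (0 : ℝ) < k := mod_cast hk
  rw [← Real.rpow_mul_natCast hk'.le, ← Real.rpow_add hk']
  push_cast
  ring_nf

lemma summable_norm_eulerDeriv_of_isBigO {a : ℕ → ℂ} {s : ℝ}
    (ha : a =O[atTop] fun k => (k : ℝ) ^ (-s)) (hs : 2 < s) :
    Summable fun k => ‖eulerDeriv a k‖ := by
  refine summable_of_isBigO_nat (Real.summable_nat_rpow.mpr (show 1 - s < -1 by linarith)) ?_
  have hcast : (fun k : ℕ => (k : ℂ)) =O[atTop] fun k => (k : ℝ) := .of_norm_le (by simp)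
  refine (hcast.mul ha).norm_left.congr' .rfl ?_
  filter_upwards [eventually_gt_atTop 0] with k hk
  rw [sub_eq_add_neg, Real.rpow_add (mod_cast hk), Real.rpow_one]

lemma isBigO_rpow_sub_one_of_succ_mul {a : ℕ → ℂ} {s : ℝ}
    (ha : (fun k : ℕ => ((k : ℂ) + 1) * a (k + 1)) =O[atTop] fun k => (k : ℝ) ^ s) :
    a =O[atTop] fun k => (k : ℝ) ^ (s - 1) := by
  have hmul : (fun k : ℕ => (k : ℂ) * a k) =O[atTop] fun k => (k : ℝ) ^ s :=
    (isBigO_rpow_comp_add_iff 1).mp (by simpa only [Nat.cast_add, Nat.cast_one] using ha)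
  have hinv : (fun k : ℕ => (k : ℂ)⁻¹) =O[atTop] fun k => (k : ℝ)⁻¹ := .of_norm_le (by simp)
  refine (hinv.mul hmul).congr' ?_ ?_ <;> filter_upwards [eventually_gt_atTop 0] with k hk
  · exact inv_mul_cancel_left₀ (mod_cast hk.ne') _
  · rw [Real.rpow_sub_one (mod_cast hk.ne'), div_eq_inv_mul]

theorem smoothedCoeff_isBigO (A : ℕ) :
    smoothedCoeff (2 * A) =O[atTop] fun k => (k : ℝ) ^ (-A : ℝ) := by
  induction A with
  | zero =>
    refine .of_bound 1 (.of_forall fun k => ?_)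
    simpa using norm_smoothedCoeff_zero_le_one k
  | succ A ih =>
    have hodd : smoothedCoeff (2 * A + 1) =O[atTop] fun k => (k : ℝ) ^ (-A : ℝ) := by
      rw [← isBigO_rpow_comp_add_iff 1]
      simpa only [smoothedCoeff_succ_succ] using ((isBigO_rpow_comp_add_iff 1).mpr ih).sub ih
    have hmul : (fun k : ℕ => ((k : ℂ) + 1) * smoothedCoeff (2 * A + 2) (k + 1)) =O[atTop]
        fun k => (k : ℝ) ^ (-A : ℝ) := by
      simp only [succ_mul_smoothedCoeff_add_two]
      exact (hodd.const_mul_left _).sub (ih.const_mul_left _)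
    simpa only [Nat.cast_succ, neg_add', mul_add_one] using isBigO_rpow_sub_one_of_succ_mul hmul

end Decay

theorem not_cyclic_of_satisfiesAtomicODE {α : ℝ} {a : ℕ → ℂ} {N : ℕ} (ha : MemD α a)
    (ha' : MemD (-α) fun k => a (k + (N + 1))) (hsum : Summable fun k => ‖eulerDeriv a k‖)
    (hode : SatisfiesAtomicODE N a) (hN : a (N + 1) ≠ 0) : ¬ Cyclic α a := by
  refine not_cyclic_of_annihilator ha ha' (fun t => ?_) (by rwa [zero_add])
  have hcorr := hasSum_correlation (summable_norm_of_summable_norm_eulerDeriv hsum)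
    (summable_norm_of_summable_norm_eulerDeriv hsum) (t + (N + 1))
  rw [correlation_self_eq_zero hsum hode (by lia)] at hcorr
  simpa only [add_assoc] using hcorr

theorem not_cyclic_smoothedCoeff {α : ℝ} {A : ℕ} (hA : |α| + 3 ≤ A) :
    ¬ Cyclic α (smoothedCoeff (2 * A)) := by
  have hdecay := smoothedCoeff_isBigO A
  refine not_cyclic_of_satisfiesAtomicODE (memD_of_isBigO hdecay ?_)
    (memD_of_isBigO ((isBigO_rpow_comp_add_iff (2 * A + 1)).mpr hdecay) ?_)
    (summable_norm_eulerDeriv_of_isBigO hdecay ?_) (satisfiesAtomicODE_smoothedCoeff _)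
    (smoothedCoeff_self_succ_ne_zero _) <;>
  linarith [le_abs_self α, neg_le_abs α, abs_nonneg α]

/-- For every `α ∈ ℝ` there are cyclic functions `f_n ∈ D_α` converging in `D_α` to a
function `f` which has no zeros in the open unit disc and yet is not cyclic for `D_α`. -/
theorem cyclicity_not_preserved (α : ℝ) :
    ∃ f : ℕ → ℂ, ∃ fn : ℕ → ℕ → ℂ,
      MemD α f ∧ (∀ n, MemD α (fn n)) ∧ (∀ n, Cyclic α (fn n)) ∧
      Tendsto (fun n => DNorm α (fun k => fn n k - f k)) atTop (𝓝 0) ∧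
      (∀ w : ℂ, ‖w‖ < 1 → (∑' k : ℕ, f k * w ^ k) ≠ 0) ∧
      ¬ Cyclic α f := by
  obtain ⟨A, hA⟩ := exists_nat_ge (|α| + 3)
  have hmem : MemD α (smoothedCoeff (2 * A)) :=
    memD_of_isBigO (smoothedCoeff_isBigO A) (by linarith [le_abs_self α, abs_nonneg α])
  obtain ⟨r, hball, hr1⟩ := mem_closure_iff_seq_limit.mp
    (show (1 : ℂ) ∈ closure (Metric.ball 0 1) by simp [closure_ball])
  have hr : ∀ n, ‖r n‖ < 1 := fun n => mem_ball_zero_iff.mp (hball n)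
  have hr' : Tendsto r atTop (𝓝[Metric.closedBall 0 1] 1) :=
    tendsto_nhdsWithin_iff.mpr ⟨hr1, .of_forall fun n => mem_closedBall_zero_iff.mpr (hr n).le⟩
  have hdiff := differentiableOn_smoothedInner (2 * A)
  refine ⟨smoothedCoeff (2 * A), fun n => dilate (r n) (smoothedCoeff (2 * A)), hmem,
    fun n => hmem.dilate (hr n).le, fun n => ?_, (tendsto_DNorm_dilate_sub hmem).comp hr',
    fun w hw => ?_, not_cyclic_smoothedCoeff hA⟩
  · exact cyclic_dilate_taylorCoeff hdiff (fun z => smoothedInner_ne_zero _) α (hr n)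
  · exact (hasSum_taylorCoeff hdiff hw).tsum_eq ▸ smoothedInner_ne_zero _ hw
end
end

section
/- Let α > 1 and f(z) = Σ_{k≥0} a_k z^k ∈ D_α. Then Σ_k |a_k| < ∞, so the series Σ_k a_k z^k converges absolutely for every z with |z| ≤ 1 and defines a continuous extension of f to the closed unit disc. Moreover, f is cyclic for D_α if and only if Σ_k a_k z^k ≠ 0 for every z with |z| ≤ 1, equivalently, if and only if there exists c > 0 with |f(z)| > c for all z ∈ 𝔻. -/
open Filter Topology

noncomputable section

/-!
After rescaling its norm by a constant, `D_α` with `α > 1` is a commutative Banach algebra under the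
Cauchy product: by Cauchy–Schwarz, `‖(fg)_k‖² ω_k ≤ ∑_{i+j=k} ‖f_i‖² ω_i ‖g_j‖² ω_j` as soon as
`ω_k ∑_{i+j=k} (ω_i ω_j)⁻¹ ≤ 1`, and a large multiple of the weight `(k+1)^α` has this property
because `∑ (k+1)^{-α}` converges. Polynomials are dense and units form an open set, so `f` is cyclic
if and only if it is a unit. By Gelfand theory this means that no character kills `f`; a character
is evaluation at its value on `z`, which lies in the closed disc because the inverse
`∑ z^k / l^{k+1}` of `l - z` belongs to `D_α` for `|l| > 1`.
-/

section SummableCoefficients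

open Finset.HasAntidiagonal (mem_antidiagonal)

variable {𝕜 : Type*} [NormedField 𝕜] {a : ℕ → 𝕜} {z : 𝕜}

lemma norm_mul_pow_le_of_norm_le_one (c : 𝕜) (hz : ‖z‖ ≤ 1) (k : ℕ) : ‖c * z ^ k‖ ≤ ‖c‖ := by
  rw [norm_mul, norm_pow]
  exact mul_le_of_le_one_right (norm_nonneg _) (pow_le_one₀ (norm_nonneg _) hz)

lemma summable_norm_mul_pow (ha : Summable fun k => ‖a k‖) (hz : ‖z‖ ≤ 1) :
    Summable fun k => ‖a k * z ^ k‖ :=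
  ha.of_nonneg_of_le (fun _ => norm_nonneg _) fun k => norm_mul_pow_le_of_norm_le_one (a k) hz k

lemma continuousOn_tsum_mul_pow [CompleteSpace 𝕜] (ha : Summable fun k => ‖a k‖) :
    ContinuousOn (fun z => ∑' k, a k * z ^ k) (Metric.closedBall 0 1) :=
  continuousOn_tsum (fun _ => by fun_prop) ha fun k _ hz =>
    norm_mul_pow_le_of_norm_le_one (a k) (by simpa using hz) k

lemma tsum_coeff_mul_mul_pow [CompleteSpace 𝕜] {f g : PowerSeries 𝕜}
    (hf : Summable fun k => ‖f.coeff k‖) (hg : Summable fun k => ‖g.coeff k‖) (hz : ‖z‖ ≤ 1) :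
    ∑' k, (f * g).coeff k * z ^ k = (∑' k, f.coeff k * z ^ k) * ∑' k, g.coeff k * z ^ k := by
  have hfz := summable_norm_mul_pow hf hz
  have hgz := summable_norm_mul_pow hg hz
  rw [tsum_mul_tsum_eq_tsum_sum_antidiagonal_of_summable_norm hfz hgz]
  refine tsum_congr fun k => ?_
  rw [PowerSeries.coeff_mul, Finset.sum_mul]
  refine Finset.sum_congr rfl fun p hp => ?_
  rw [← mem_antidiagonal.1 hp]
  ring

end SummableCoefficients

lemma exists_pos_forall_lt_norm_iff_forall_closure_ne_zero {X E : Type*} [TopologicalSpace X]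
    [NormedAddCommGroup E] {s : Set X} {g : X → E} (hs : IsCompact (closure s))
    (hg : ContinuousOn g (closure s)) :
    (∃ c : ℝ, 0 < c ∧ ∀ x ∈ s, c < ‖g x‖) ↔ ∀ x ∈ closure s, g x ≠ 0 := by
  refine ⟨fun ⟨c, hc, h⟩ x hx => ?_, fun h => ?_⟩
  · have hle : c ≤ ‖g x‖ := le_on_closure (fun y hy => (h y hy).le) continuousOn_const hg.norm hx
    exact norm_pos_iff.1 (hc.trans_le hle)
  · obtain ⟨c, hc, hle⟩ := hs.exists_forall_le' hg.norm fun x hx => norm_pos_iff.2 (h x hx)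
    exact ⟨c / 2, half_pos hc, fun x hx => (half_lt_self hc).trans_le (hle x (subset_closure hx))⟩

section AlgebraWeight

open Finset.HasAntidiagonal (antidiagonal mem_antidiagonal)

/-- Positive weights `ω` whose reciprocals satisfy the convolution bound that, by Cauchy–Schwarz,
makes the norm `√(∑ ‖f_k‖² ω_k)` submultiplicative for the Cauchy product. -/
class IsAlgebraWeight (ω : ℕ → ℝ) : Prop where
  pos : ∀ k, 0 < ω k
  mul_sum_antidiagonal_inv_le_one :
    ∀ k, ω k * ∑ p ∈ antidiagonal k, (ω p.1 * ω p.2)⁻¹ ≤ 1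

lemma mul_sum_antidiagonal_inv_le {w : ℕ → ℝ} {C : ℝ} (hw : ∀ k, 0 < w k)
    (hadd : ∀ i j, w (i + j) ≤ C * (w i + w j)) (hsum : Summable fun k => (w k)⁻¹) (k : ℕ) :
    w k * ∑ p ∈ antidiagonal k, (w p.1 * w p.2)⁻¹ ≤ 2 * C * ∑' i, (w i)⁻¹ := by
  have hC : 0 ≤ C := by nlinarith [hadd 0 0, hw 0]
  have hterm : ∀ p ∈ antidiagonal k,
      w k * (w p.1 * w p.2)⁻¹ ≤ C * ((w p.1)⁻¹ + (w p.2)⁻¹) := by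
    rintro ⟨i, j⟩ hij
    have hi := hw i
    have hj := hw j
    calc w k * (w i * w j)⁻¹ ≤ C * (w i + w j) * (w i * w j)⁻¹ := by
          rw [← mem_antidiagonal.1 hij]
          gcongr
          exact hadd i j
      _ = C * ((w i)⁻¹ + (w j)⁻¹) := by field_simp; ring
  have hswap : ∑ p ∈ antidiagonal k, (w p.2)⁻¹ = ∑ p ∈ antidiagonal k, (w p.1)⁻¹ :=
    Finset.Nat.sum_antidiagonal_swap (f := fun p => (w p.1)⁻¹)
  have hpartial : ∑ p ∈ antidiagonal k, (w p.1)⁻¹ ≤ ∑' i, (w i)⁻¹ := by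
    rw [Finset.Nat.sum_antidiagonal_eq_sum_range_succ_mk]
    exact hsum.sum_le_tsum _ fun i _ => (inv_pos.2 (hw i)).le
  calc w k * ∑ p ∈ antidiagonal k, (w p.1 * w p.2)⁻¹
      ≤ ∑ p ∈ antidiagonal k, C * ((w p.1)⁻¹ + (w p.2)⁻¹) := by
        rw [Finset.mul_sum]
        exact Finset.sum_le_sum hterm
    _ = 2 * C * ∑ p ∈ antidiagonal k, (w p.1)⁻¹ := by
        rw [← Finset.mul_sum, Finset.sum_add_distrib, hswap]
        ring
    _ ≤ 2 * C * ∑' i, (w i)⁻¹ := by gcongr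

lemma IsAlgebraWeight.of_mul_sum_antidiagonal_inv_le {w : ℕ → ℝ} {K : ℝ} (hw : ∀ k, 0 < w k)
    (hK : 0 < K) (h : ∀ k, w k * ∑ p ∈ antidiagonal k, (w p.1 * w p.2)⁻¹ ≤ K) :
    IsAlgebraWeight fun k => K * w k where
  pos k := mul_pos hK (hw k)
  mul_sum_antidiagonal_inv_le_one k := by
    calc K * w k * ∑ p ∈ antidiagonal k, (K * w p.1 * (K * w p.2))⁻¹
        = K⁻¹ * (w k * ∑ p ∈ antidiagonal k, (w p.1 * w p.2)⁻¹) := by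
          simp only [Finset.mul_sum]
          refine Finset.sum_congr rfl fun p _ => ?_
          have h₁ := (hw p.1).ne'
          have h₂ := (hw p.2).ne'
          field_simp
      _ ≤ K⁻¹ * K := by
          gcongr
          exact h k
      _ = 1 := inv_mul_cancel₀ hK.ne'

lemma norm_coeff_mul_sq_mul_le {R : Type*} [NormedRing R] {ω : ℕ → ℝ} [IsAlgebraWeight ω]
    (f g : PowerSeries R) (k : ℕ) :
    ‖(f * g).coeff k‖ ^ 2 * ω k ≤ ∑ p ∈ antidiagonal k,
      (‖f.coeff p.1‖ ^ 2 * ω p.1) * (‖g.coeff p.2‖ ^ 2 * ω p.2) := by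
  have hω := IsAlgebraWeight.pos (ω := ω)
  set F := ∑ p ∈ antidiagonal k,
    (‖f.coeff p.1‖ ^ 2 * ω p.1) * (‖g.coeff p.2‖ ^ 2 * ω p.2)
  set W := ∑ p ∈ antidiagonal k, (ω p.1 * ω p.2)⁻¹
  have hterm_nonneg : ∀ p ∈ antidiagonal k,
      0 ≤ (‖f.coeff p.1‖ ^ 2 * ω p.1) * (‖g.coeff p.2‖ ^ 2 * ω p.2) := fun p _ =>
    mul_nonneg (mul_nonneg (sq_nonneg _) (hω p.1).le) (mul_nonneg (sq_nonneg _) (hω p.2).le)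
  have hnorm : ‖(f * g).coeff k‖ ≤
      ∑ p ∈ antidiagonal k, ‖f.coeff p.1‖ * ‖g.coeff p.2‖ := by
    rw [PowerSeries.coeff_mul]
    exact norm_sum_le_of_le _ fun p _ => norm_mul_le _ _
  have hcauchy_schwarz :
      (∑ p ∈ antidiagonal k, ‖f.coeff p.1‖ * ‖g.coeff p.2‖) ^ 2 ≤ F * W := by
    refine Finset.sum_sq_le_sum_mul_sum_of_sq_le_mul _ hterm_nonneg
      (fun p _ => (inv_pos.2 (mul_pos (hω p.1) (hω p.2))).le) fun p _ => le_of_eq ?_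
    have h₁ := (hω p.1).ne'
    have h₂ := (hω p.2).ne'
    field_simp
  calc ‖(f * g).coeff k‖ ^ 2 * ω k ≤ F * W * ω k :=
        mul_le_mul_of_nonneg_right ((pow_le_pow_left₀ (norm_nonneg _) hnorm 2).trans
          hcauchy_schwarz) (hω k).le
    _ = F * (ω k * W) := by ring
    _ ≤ F := mul_le_of_le_one_right (Finset.sum_nonneg hterm_nonneg)
        (IsAlgebraWeight.mul_sum_antidiagonal_inv_le_one k)

end AlgebraWeight

lemma summable_norm_coeff_polynomial_sq_mul (ω : ℕ → ℝ) (p : Polynomial ℂ) :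
    Summable fun k => ‖p.coeff k‖ ^ 2 * ω k :=
  summable_of_ne_finset_zero (s := p.support) fun k hk => by
    simp [Polynomial.notMem_support_iff.1 hk]

lemma memℓp_two_sqrt_mul_iff {ω : ℕ → ℝ} (hω : ∀ k, 0 ≤ ω k) (a : ℕ → ℂ) :
    Memℓp (fun k => (√(ω k) : ℂ) * a k) 2 ↔ Summable fun k => ‖a k‖ ^ 2 * ω k := by
  rw [memℓp_gen_iff (by simp)]
  refine summable_congr fun k => ?_
  simp [mul_pow, abs_of_nonneg, Real.sq_sqrt (hω k), mul_comm]

/-- The weighted `ℓ²` space with weight `ω`, as an algebra of formal power series. The `D_α` norm is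
of this form, up to a constant factor, when `α > 1`. -/
def weightedAlgebra (ω : ℕ → ℝ) [IsAlgebraWeight ω] : Subalgebra ℂ (PowerSeries ℂ) where
  carrier := {f | Summable fun k => ‖f.coeff k‖ ^ 2 * ω k}
  mul_mem' {f g} hf hg := by
    have hω := IsAlgebraWeight.pos (ω := ω)
    exact Summable.of_nonneg_of_le (fun k => mul_nonneg (sq_nonneg _) (hω k).le)
      (norm_coeff_mul_sq_mul_le f g)
      (summable_norm_sum_mul_antidiagonal_of_summable_norm hf.norm hg.norm).of_norm
  add_mem' {f g} hf hg := by
    have hω : ∀ k, 0 ≤ ω k := fun k => (IsAlgebraWeight.pos k).le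
    simp only [Set.mem_ofPred_eq, ← memℓp_two_sqrt_mul_iff hω, map_add, mul_add] at hf hg ⊢
    exact hf.add hg
  algebraMap_mem' c := by
    simpa [PowerSeries.algebraMap_apply, PowerSeries.coeff_C, Polynomial.coeff_C]
      using summable_norm_coeff_polynomial_sq_mul ω (Polynomial.C c)

namespace weightedAlgebra

variable {ω : ℕ → ℝ} [IsAlgebraWeight ω]

lemma mem_iff {f : PowerSeries ℂ} :
    f ∈ weightedAlgebra ω ↔ Summable fun k => ‖f.coeff k‖ ^ 2 * ω k := .rfl

lemma summable_norm_coeff_sq_mul (f : weightedAlgebra ω) :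
    Summable fun k => ‖f.1.coeff k‖ ^ 2 * ω k := f.2

lemma ofReal_sqrt_weight_ne_zero (k : ℕ) : (√(ω k) : ℂ) ≠ 0 :=
  Complex.ofReal_ne_zero.2 (Real.sqrt_pos.2 (IsAlgebraWeight.pos k)).ne'

/-- The identification of the weighted `ℓ²` space with `ℓ²` multiplying the `k`-th coefficient by
`√(ω k)`; the norm and its completeness are transported along it. -/
def equivL2 : weightedAlgebra ω ≃ₗ[ℂ] lp (fun _ : ℕ => ℂ) 2 where
  toFun f := ⟨fun k => (√(ω k) : ℂ) * f.1.coeff k,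
    (memℓp_two_sqrt_mul_iff (fun k => (IsAlgebraWeight.pos k).le) _).2
      (summable_norm_coeff_sq_mul f)⟩
  map_add' f g := by
    ext k
    exact mul_add _ _ _
  map_smul' c f := by
    ext k
    exact mul_left_comm _ _ _
  invFun x := ⟨PowerSeries.mk fun k => (√(ω k) : ℂ)⁻¹ * x k, by
    simp only [mem_iff, PowerSeries.coeff_mk]
    rw [← memℓp_two_sqrt_mul_iff fun k => (IsAlgebraWeight.pos k).le]
    simpa only [mul_inv_cancel_left₀ (ofReal_sqrt_weight_ne_zero _)] using lp.memℓp x⟩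
  left_inv f := by
    ext k
    simpa using inv_mul_cancel_left₀ (ofReal_sqrt_weight_ne_zero k) _
  right_inv x := by
    ext k
    simpa using mul_inv_cancel_left₀ (ofReal_sqrt_weight_ne_zero k) _

lemma equivL2_apply (f : weightedAlgebra ω) (k : ℕ) :
    equivL2 f k = (√(ω k) : ℂ) * f.1.coeff k := rfl

instance : NormedAddCommGroup (weightedAlgebra ω) :=
  NormedAddCommGroup.induced _ (lp (fun _ : ℕ => ℂ) 2) equivL2 equivL2.injective

lemma isometry_equivL2 : Isometry (equivL2 (ω := ω)) :=
  AddMonoidHomClass.isometry_of_norm equivL2 fun _ => rfl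

lemma norm_sq_eq_tsum (f : weightedAlgebra ω) : ‖f‖ ^ 2 = ∑' k, ‖f.1.coeff k‖ ^ 2 * ω k := by
  have h := lp.norm_rpow_eq_tsum (p := 2) (by simp) (equivL2 f)
  simp only [ENNReal.toReal_ofNat, Real.rpow_ofNat, equivL2_apply] at h
  refine h.trans (tsum_congr fun k => ?_)
  simp [mul_pow, Real.sq_sqrt (IsAlgebraWeight.pos (ω := ω) k).le, mul_comm]

lemma norm_mul_le_mul_norm (f g : weightedAlgebra ω) : ‖f * g‖ ≤ ‖f‖ * ‖g‖ := by
  refine le_of_sq_le_sq ?_ (by positivity)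
  have hf := summable_norm_coeff_sq_mul f
  have hg := summable_norm_coeff_sq_mul g
  rw [mul_pow, norm_sq_eq_tsum, norm_sq_eq_tsum, norm_sq_eq_tsum,
    tsum_mul_tsum_eq_tsum_sum_antidiagonal_of_summable_norm hf.norm hg.norm]
  exact (summable_norm_coeff_sq_mul (f * g)).tsum_le_tsum (norm_coeff_mul_sq_mul_le f.1 g.1)
    (summable_norm_sum_mul_antidiagonal_of_summable_norm hf.norm hg.norm).of_norm

instance : NormedCommRing (weightedAlgebra ω) where
  __ := (inferInstance : NormedAddCommGroup (weightedAlgebra ω))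
  __ := (inferInstance : CommRing (weightedAlgebra ω))
  norm_mul_le := norm_mul_le_mul_norm

instance : NormedAlgebra ℂ (weightedAlgebra ω) where
  norm_smul_le c f := by
    change ‖equivL2 (c • f)‖ ≤ ‖c‖ * ‖equivL2 f‖
    rw [map_smul, norm_smul]

instance : CompleteSpace (weightedAlgebra ω) :=
  (isometry_equivL2.isUniformInducing.completeSpace_congr equivL2.surjective).2 inferInstance

/-- The coordinate function `z`. -/
def X : weightedAlgebra ω := ⟨PowerSeries.X, by
  simpa [mem_iff, PowerSeries.coeff_X, Polynomial.coeff_X, eq_comm]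
    using summable_norm_coeff_polynomial_sq_mul ω Polynomial.X⟩

lemma coe_aeval_X (p : Polynomial ℂ) :
    ((Polynomial.aeval X p : weightedAlgebra ω) : PowerSeries ℂ) = p := by
  rw [X, Polynomial.coe_aeval_mk_apply]
  exact Polynomial.eval₂_C_X_eq_coe

lemma hasSum_coeff_smul_X_pow (f : weightedAlgebra ω) :
    HasSum (fun k => f.1.coeff k • (X : weightedAlgebra ω) ^ k) f := by
  have hsingle : ∀ k, equivL2 (f.1.coeff k • (X : weightedAlgebra ω) ^ k) =
      lp.single 2 k (equivL2 f k) := by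
    intro k
    ext j
    rcases eq_or_ne j k with rfl | hjk
    · simp [equivL2_apply, X]
    · simp [equivL2_apply, X, PowerSeries.coeff_X_pow, hjk]
  rw [← isometry_equivL2.isUniformInducing.isInducing.hasSum_iff]
  simpa only [Function.comp_def, hsingle] using lp.hasSum_single ENNReal.ofNat_ne_top (equivL2 f)

lemma denseRange_aeval_X :
    DenseRange (Polynomial.aeval X : Polynomial ℂ → weightedAlgebra ω) := by
  intro f
  refine mem_closure_of_tendsto (hasSum_coeff_smul_X_pow f).tendsto_sum_nat
    (.of_forall fun n => ⟨∑ k ∈ Finset.range n, Polynomial.monomial k (f.1.coeff k), ?_⟩)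
  simp [Polynomial.aeval_monomial, Algebra.smul_def]

lemma isUnit_iff_exists_tendsto_aeval_X_mul (f : weightedAlgebra ω) :
    IsUnit f ↔ ∃ p : ℕ → Polynomial ℂ,
      Tendsto (fun n => Polynomial.aeval X (p n) * f) atTop (𝓝 1) := by
  refine ⟨fun hf => ?_, fun ⟨p, hp⟩ => ?_⟩
  · obtain ⟨g, hgf⟩ := hf.exists_left_inv
    obtain ⟨q, hq, hlim⟩ := mem_closure_iff_seq_limit.1 (denseRange_aeval_X g)
    choose p hp using hq
    refine ⟨p, ?_⟩
    simpa only [hp, hgf] using hlim.mul_const f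
  · obtain ⟨n, hn⟩ := (hp.eventually (Units.isOpen.mem_nhds isUnit_one)).exists
    exact isUnit_of_mul_isUnit_right hn

lemma spectrum_X_subset_closedBall
    (hω : ∀ r : ℝ, 0 < r → r < 1 → Summable fun k => r ^ k * ω k) :
    spectrum ℂ (X : weightedAlgebra ω) ⊆ Metric.closedBall 0 1 := by
  intro l hl
  by_contra hnorm
  replace hnorm : 1 < ‖l‖ := by simpa using hnorm
  have hl₀ : l ≠ 0 := norm_pos_iff.1 (zero_lt_one.trans hnorm)
  have hmem : PowerSeries.invUnitsSub (Units.mk0 l hl₀) ∈ weightedAlgebra ω := by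
    have hr : (‖l‖ ^ 2)⁻¹ < 1 := inv_lt_one_of_one_lt₀ (one_lt_pow₀ hnorm two_ne_zero)
    refine ((hω _ (by positivity) hr).mul_left (‖l‖ ^ 2)⁻¹).congr fun k => ?_
    simp [divp]
    ring
  refine hl (.of_mul_eq_one_right ⟨_, hmem⟩ (Subtype.ext ?_))
  exact PowerSeries.invUnitsSub_mul_sub (Units.mk0 l hl₀)

lemma summable_norm_coeff (hω : Summable fun k => (ω k)⁻¹) (f : weightedAlgebra ω) :
    Summable fun k => ‖f.1.coeff k‖ := by
  refine Summable.of_nonneg_of_le (fun _ => norm_nonneg _) (fun k => ?_)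
    ((summable_norm_coeff_sq_mul f).add hω)
  have hωk := IsAlgebraWeight.pos (ω := ω) k
  have hsq := mul_nonneg (sq_nonneg (‖f.1.coeff k‖ * ω k - 1)) (inv_pos.2 hωk).le
  calc ‖f.1.coeff k‖ ≤ 2 * ‖f.1.coeff k‖ := by linarith [norm_nonneg (f.1.coeff k)]
    _ ≤ ‖f.1.coeff k‖ ^ 2 * ω k + (ω k)⁻¹ := by
        field_simp at hsq ⊢
        linarith

lemma tsum_coeff_mul_pow_ne_zero_of_isUnit (hω : Summable fun k => (ω k)⁻¹)
    {f : weightedAlgebra ω} (hf : IsUnit f) {z : ℂ} (hz : ‖z‖ ≤ 1) :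
    ∑' k, f.1.coeff k * z ^ k ≠ 0 := by
  obtain ⟨g, hfg⟩ := hf.exists_right_inv
  have hone : ∑' k, (f * g).1.coeff k * z ^ k = 1 := by
    rw [hfg, tsum_eq_single 0 fun k hk => by simp [PowerSeries.coeff_one, hk]]
    simp
  have hmul := tsum_coeff_mul_mul_pow (summable_norm_coeff hω f) (summable_norm_coeff hω g) hz
  exact left_ne_zero_of_mul_eq_one (hmul.symm.trans hone)

lemma tsum_coeff_mul_algHom_X_pow (φ : weightedAlgebra ω →ₐ[ℂ] ℂ) (f : weightedAlgebra ω) :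
    ∑' k, f.1.coeff k * φ X ^ k = φ f := by
  have h := (hasSum_coeff_smul_X_pow f).map φ (map_continuous φ)
  simpa [Function.comp_def] using h.tsum_eq

lemma isUnit_iff_forall_tsum_coeff_mul_pow_ne_zero (hinv : Summable fun k => (ω k)⁻¹)
    (hgeom : ∀ r : ℝ, 0 < r → r < 1 → Summable fun k => r ^ k * ω k) (f : weightedAlgebra ω) :
    IsUnit f ↔ ∀ z : ℂ, ‖z‖ ≤ 1 → ∑' k, f.1.coeff k * z ^ k ≠ 0 := by
  refine ⟨fun hf z hz => tsum_coeff_mul_pow_ne_zero_of_isUnit hinv hf hz, fun h => ?_⟩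
  by_contra hf
  obtain ⟨φ, hφ⟩ := WeakDual.CharacterSpace.exists_apply_eq_zero hf
  have hX : ‖φ X‖ ≤ 1 := by
    simpa using spectrum_X_subset_closedBall hgeom (AlgHom.apply_mem_spectrum φ X)
  exact h _ hX ((tsum_coeff_mul_algHom_X_pow
    (WeakDual.CharacterSpace.toAlgHom φ) f).trans hφ)

end weightedAlgebra

section Dirichlet

variable {α : ℝ}

lemma add_add_one_rpow_le (hα : 1 ≤ α) {x y : ℝ} (hx : 0 ≤ x) (hy : 0 ≤ y) :
    (x + y + 1) ^ α ≤ 2 ^ (α - 1) * ((x + 1) ^ α + (y + 1) ^ α) := by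
  lift x to NNReal using hx
  lift y to NNReal using hy
  calc ((x : ℝ) + y + 1) ^ α ≤ ((x + 1 : ℝ) + (y + 1)) ^ α :=
        Real.rpow_le_rpow (by positivity) (by linarith) (by linarith)
    _ ≤ 2 ^ (α - 1) * ((x + 1 : ℝ) ^ α + (y + 1 : ℝ) ^ α) := by
        exact_mod_cast NNReal.rpow_add_le_mul_rpow_add_rpow (x + 1) (y + 1) hα

lemma summable_inv_add_one_rpow (hα : 1 < α) : Summable fun k : ℕ => (((k : ℝ) + 1) ^ α)⁻¹ := by
  simpa using (summable_nat_add_iff 1).2 (Real.summable_nat_rpow_inv.2 hα)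

lemma summable_geometric_mul_add_one_rpow (α : ℝ) {r : ℝ} (hr₀ : 0 < r) (hr₁ : r < 1) :
    Summable fun k : ℕ => r ^ k * ((k : ℝ) + 1) ^ α := by
  obtain ⟨m, hm⟩ := exists_nat_ge α
  have hpow : Summable fun k : ℕ => (k : ℝ) ^ m * r ^ k :=
    summable_pow_mul_geometric_of_norm_lt_one m (by rwa [Real.norm_of_nonneg hr₀.le])
  have hshift := (summable_nat_add_iff 1).2 hpow
  refine Summable.of_nonneg_of_le (fun k => by positivity) (fun k => ?_) (hshift.mul_left r⁻¹)
  calc r ^ k * ((k : ℝ) + 1) ^ α ≤ r ^ k * ((k : ℝ) + 1) ^ m := by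
        gcongr
        rw [← Real.rpow_natCast]
        exact Real.rpow_le_rpow_of_exponent_le (by simp) hm
    _ = r⁻¹ * (((k + 1 : ℕ) : ℝ) ^ m * r ^ (k + 1)) := by
        push_cast
        field_simp
        ring

/-- A factor by which the squared norm of `D_α` can be multiplied to become submultiplicative; it is
the bound of `mul_sum_antidiagonal_inv_le` for the weight `(k + 1) ^ α`. -/
def dirichletConst (α : ℝ) : ℝ := 2 * 2 ^ (α - 1) * ∑' k : ℕ, (((k : ℝ) + 1) ^ α)⁻¹

/-- The weight of the rescaled norm of `D_α`. -/
def dirichletWeight (α : ℝ) (k : ℕ) : ℝ := dirichletConst α * ((k : ℝ) + 1) ^ α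

lemma dirichletConst_pos (hα : 1 < α) : 0 < dirichletConst α :=
  mul_pos (by positivity)
    ((summable_inv_add_one_rpow hα).tsum_pos (fun _ => by positivity) 0 (by simp))

instance [hα : Fact (1 < α)] : IsAlgebraWeight (dirichletWeight α) :=
  .of_mul_sum_antidiagonal_inv_le (fun k => by positivity) (dirichletConst_pos hα.out) <|
    mul_sum_antidiagonal_inv_le (fun k => by positivity)
      (fun i j => by
        push_cast
        exact add_add_one_rpow_le hα.out.le i.cast_nonneg j.cast_nonneg)
      (summable_inv_add_one_rpow hα.out)

lemma summable_inv_dirichletWeight (hα : 1 < α) : Summable fun k => (dirichletWeight α k)⁻¹ := by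
  simpa only [dirichletWeight, mul_inv] using (summable_inv_add_one_rpow hα).mul_left _

lemma summable_geometric_mul_dirichletWeight (α : ℝ) {r : ℝ} (hr₀ : 0 < r) (hr₁ : r < 1) :
    Summable fun k => r ^ k * dirichletWeight α k := by
  simpa only [dirichletWeight, mul_left_comm]
    using (summable_geometric_mul_add_one_rpow α hr₀ hr₁).mul_left (dirichletConst α)

variable [hα : Fact (1 < α)]

lemma mk_mem_weightedAlgebra {a : ℕ → ℂ} (ha : MemD α a) :
    PowerSeries.mk a ∈ weightedAlgebra (dirichletWeight α) := by
  refine (ha.mul_left (dirichletConst α)).congr fun k => ?_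
  rw [PowerSeries.coeff_mk, dirichletWeight]
  ring

lemma norm_eq_sqrt_dirichletConst_mul_DNorm (f : weightedAlgebra (dirichletWeight α)) :
    ‖f‖ = √(dirichletConst α) * DNorm α fun k => f.1.coeff k := by
  rw [DNorm, ← Real.sqrt_mul (dirichletConst_pos hα.out).le, ← tsum_mul_left,
    ← Real.sqrt_sq (norm_nonneg f), weightedAlgebra.norm_sq_eq_tsum f]
  congr 2 with k
  rw [dirichletWeight]
  ring

lemma mulCoeff_coeff (f g : PowerSeries ℂ) :
    mulCoeff (fun k => f.coeff k) (fun k => g.coeff k) = fun k => (f * g).coeff k := by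
  funext k
  rw [PowerSeries.coeff_mul, Finset.Nat.sum_antidiagonal_eq_sum_range_succ_mk, mulCoeff]

lemma cyclic_coeff_iff_isUnit (f : weightedAlgebra (dirichletWeight α)) :
    Cyclic α (fun k => f.1.coeff k) ↔ IsUnit f := by
  have hconst : √(dirichletConst α) ≠ 0 := (Real.sqrt_pos.2 (dirichletConst_pos hα.out)).ne'
  have hnorm : ∀ p : Polynomial ℂ, ‖Polynomial.aeval weightedAlgebra.X p * f - 1‖ =
      √(dirichletConst α) *
        DNorm α fun k => mulCoeff p.coeff (fun k => f.1.coeff k) k - oneCoeff k := by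
    intro p
    have hcoeff : mulCoeff p.coeff (fun k => f.1.coeff k) = fun k => (p * f.1).coeff k := by
      simpa using mulCoeff_coeff p f.1
    rw [norm_eq_sqrt_dirichletConst_mul_DNorm, hcoeff]
    simp [weightedAlgebra.coe_aeval_X, PowerSeries.coeff_one, oneCoeff]
  rw [weightedAlgebra.isUnit_iff_exists_tendsto_aeval_X_mul, Cyclic]
  refine exists_congr fun p => ?_
  rw [tendsto_iff_norm_sub_tendsto_zero (b := (1 : weightedAlgebra _))]
  simpa only [hnorm, smul_eq_mul, mul_zero]
    using (tendsto_const_smul_iff₀ hconst (a := (0 : ℝ))).symm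

end Dirichlet

lemma summable_norm_of_memD {α : ℝ} (hα : 1 < α) {a : ℕ → ℂ} (ha : MemD α a) :
    Summable fun k => ‖a k‖ := by
  have : Fact (1 < α) := ⟨hα⟩
  simpa using weightedAlgebra.summable_norm_coeff (summable_inv_dirichletWeight hα)
    ⟨_, mk_mem_weightedAlgebra ha⟩

lemma cyclic_iff_forall_tsum_mul_pow_ne_zero {α : ℝ} (hα : 1 < α) {a : ℕ → ℂ} (ha : MemD α a) :
    Cyclic α a ↔ ∀ z : ℂ, ‖z‖ ≤ 1 → ∑' k, a k * z ^ k ≠ 0 := by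
  have : Fact (1 < α) := ⟨hα⟩
  let f : weightedAlgebra (dirichletWeight α) := ⟨_, mk_mem_weightedAlgebra ha⟩
  simpa [f] using (cyclic_coeff_iff_isUnit f).trans
    (weightedAlgebra.isUnit_iff_forall_tsum_coeff_mul_pow_ne_zero (summable_inv_dirichletWeight hα)
      (fun _ => summable_geometric_mul_dirichletWeight α) f)

/-- For `α > 1` and `f = Σ a_k z^k ∈ D_α`: the coefficients are absolutely summable, the
series converges absolutely on the closed disc and defines a continuous extension, and `f`
is cyclic iff it has no zeros on the closed disc, iff `|f| > c > 0` on `𝔻`. -/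
theorem cyclic_iff_no_zeros (α : ℝ) (hα : 1 < α) (a : ℕ → ℂ) (ha : MemD α a) :
    Summable (fun k : ℕ => ‖a k‖) ∧
    (∀ z : ℂ, ‖z‖ ≤ 1 → Summable (fun k : ℕ => ‖a k * z ^ k‖)) ∧
    ContinuousOn (fun z : ℂ => ∑' k : ℕ, a k * z ^ k) (Metric.closedBall 0 1) ∧
    (Cyclic α a ↔ ∀ z : ℂ, ‖z‖ ≤ 1 → (∑' k : ℕ, a k * z ^ k) ≠ 0) ∧
    (Cyclic α a ↔ ∃ c : ℝ, 0 < c ∧ ∀ z : ℂ, ‖z‖ < 1 → c < ‖∑' k : ℕ, a k * z ^ k‖) := by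
  have hsum := summable_norm_of_memD hα ha
  have hcont := continuousOn_tsum_mul_pow hsum
  have hcyclic := cyclic_iff_forall_tsum_mul_pow_ne_zero hα ha
  refine ⟨hsum, fun z hz => summable_norm_mul_pow hsum hz, hcont, hcyclic, hcyclic.trans ?_⟩
  have hclosure : closure (Metric.ball (0 : ℂ) 1) = Metric.closedBall 0 1 :=
    closure_ball 0 one_ne_zero
  rw [← hclosure] at hcont
  have hbound := exists_pos_forall_lt_norm_iff_forall_closure_ne_zero
    (hclosure ▸ isCompact_closedBall 0 1) hcont
  simpa only [hclosure, mem_ball_zero_iff, mem_closedBall_zero_iff] using hbound.symm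
end
end
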